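/- Let K be a field, t,n ∈ K, and let V = {x·𝔯 + y·𝔦 : x,y ∈ K} ⊆ M₂(K), where 𝔯 is the 2×2 identity matrix and 𝔦 = [[0,1],[−n,t]]. Call a 3×3 matrix H over V Hermitian if every diagonal entry of H lies in K·𝔯 and H_{ji} = (H_{ij})ᵃᵈʲ for all i,j, and say H has rank 1 if for every two rows R₁,R₂ of H there exist a,b ∈ V with a·R₁ + b·R₂ = 0 (entrywise) such that no nonzero c ∈ V satisfies a·c = b·c = 0. Then the set of rank-1 Hermitian 3×3 matrices over V is exactly the set of K-scalar multiples of matrices H(M,N,L) whose (i,j) entry is Pᵢ·(Pⱼ)ᵃᵈʲ, where (P₁,P₂,P₃) = (M,N,L) ranges over the triples in V³ with trivial annihilator in V. -/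

import Mathlib

/-- `A` belongs to the 2-dimensional matrix algebra `V = {x·𝔯 + y·𝔦}` inside `M₂(K)`,
where `𝔯` is the identity matrix and `𝔦 = [[0,1],[−n,t]]`. -/
def InV {K : Type} [Field K] (t n : K) (A : Matrix (Fin 2) (Fin 2) K) : Prop :=
  ∃ x y : K, A = x • (1 : Matrix (Fin 2) (Fin 2) K) + y • !![0, 1; -n, t]

/-- The Hermitian 3×3 matrix `H(M,N,L)` over `V` with `(i,j)` entry `Pᵢ·(Pⱼ)ᵃᵈʲ`, where
`(P₁,P₂,P₃) = (M,N,L)`. -/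
def Hmat {K : Type} [Field K] (M N L : Matrix (Fin 2) (Fin 2) K) :
    Matrix (Fin 3) (Fin 3) (Matrix (Fin 2) (Fin 2) K) :=
  Matrix.of fun i j => (![M, N, L] i) * (![M, N, L] j).adjugate

/-- A 3×3 matrix `H` over `V` is Hermitian: all entries lie in `V`, the diagonal entries lie
in `K·𝔯`, and `H j i` is the adjugate of `H i j`. -/
def IsHermitian3 {K : Type} [Field K] (t n : K)
    (H : Matrix (Fin 3) (Fin 3) (Matrix (Fin 2) (Fin 2) K)) : Prop :=
  (∀ i j, InV t n (H i j)) ∧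
  (∀ i, ∃ k : K, H i i = k • (1 : Matrix (Fin 2) (Fin 2) K)) ∧
  (∀ i j, H j i = (H i j).adjugate)

/-- `H` has rank 1: for every two rows `Rᵢ, Rⱼ` there are `a, b ∈ V` with `a·Rᵢ + b·Rⱼ = 0`
such that no nonzero `c ∈ V` satisfies `a·c = b·c = 0`. -/
def HasRankOne {K : Type} [Field K] (t n : K)
    (H : Matrix (Fin 3) (Fin 3) (Matrix (Fin 2) (Fin 2) K)) : Prop :=
  ∀ i j : Fin 3, ∃ a b : Matrix (Fin 2) (Fin 2) K, InV t n a ∧ InV t n b ∧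
    (∀ col : Fin 3, a * H i col + b * H j col = 0) ∧
    (∀ c : Matrix (Fin 2) (Fin 2) K, InV t n c → a * c = 0 → b * c = 0 → c = 0)

open QuadraticAlgebra in
theorem qa_rank {K : Type} [Field K] {a b : K} (P Q : QuadraticAlgebra K a b) :
    ∃ u v : QuadraticAlgebra K a b, u * P + v * Q = 0 ∧
      ∀ c : QuadraticAlgebra K a b, u * c = 0 → v * c = 0 → c = 0 := by
  by_cases h : ∀ c : QuadraticAlgebra K a b, Q * c = 0 → P * c = 0 → c = 0
  · refine ⟨Q, -P, by ring, fun c h1 h2 => h c h1 ?_⟩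
    linear_combination -h2
  · push Not at h
    obtain ⟨c, hQ, hP, hc⟩ := h
    have key : ∀ d : K, d • c = 0 → d = 0 := fun d hd => (smul_eq_zero.mp hd).resolve_right hc
    by_cases h0 : P.im = 0 ∧ Q.im = 0
    · refine ⟨1, 0, ?_, fun c h1 _ => by simpa using h1⟩
      have : P.re = 0 := by
        apply key
        rw [← hP]
        ext <;> simp [h0.1]
      have : P = 0 := by ext <;> simp [this, h0.1]
      simp [this]
    · refine ⟨algebraMap K _ Q.im, algebraMap K _ (-P.im), ?_, fun c h1 h2 => ?_⟩
      · have h3 : Q.im * P.re - P.im * Q.re = 0 := by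
          apply key
          have : Q.im • (P * c) - P.im • (Q * c) = 0 := by simp [hP, hQ]
          rw [← this]
          ext <;> simp <;> ring
        ext
        · simp; linear_combination h3
        · simp; ring
      · rw [← Algebra.smul_def] at h1 h2
        by_contra hc'
        have h1' := (smul_eq_zero.mp h1).resolve_right hc'
        have h2' := (smul_eq_zero.mp h2).resolve_right hc'
        exact h0 ⟨by simpa using h2', h1'⟩

open QuadraticAlgebra in
theorem qa_split {K : Type} [Field K] {a b : K} (f : QuadraticAlgebra K a b)
    (h1 : f + star f = 1) (h2 : f * star f = 0) (z : QuadraticAlgebra K a b) :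
    ∃ x : K, z * f = algebraMap K _ x * f := by
  have hff : (f - 1) * f = 0 := by linear_combination f * h1 - h2
  have hq : f.im ≠ 0 := by
    intro hq
    have e1 := congrArg QuadraticAlgebra.re h1
    have e2 := congrArg QuadraticAlgebra.re h2
    simp [hq] at e1 e2
    simp [e2] at e1
  refine ⟨z.re + z.im * (1 - f.re) / f.im, ?_⟩
  have : z - algebraMap K _ (z.re + z.im * (1 - f.re) / f.im)
      = algebraMap K _ (z.im / f.im) * (f - 1) := by
    ext
    · simp; field_simp; ring
    · simp; field_simp
  linear_combination f * this + algebraMap K _ (z.im / f.im) * hff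

theorem qa_main {K : Type} [Field K] {a b : K}
    (H : Fin 3 → Fin 3 → QuadraticAlgebra K a b) (d : Fin 3 → K)
    (hd : ∀ i, H i i = algebraMap K _ (d i)) (hs : ∀ i j, H j i = star (H i j))
    (hr : ∀ i j, ∃ u v : QuadraticAlgebra K a b, (∀ l, u * H i l + v * H j l = 0) ∧
      ∀ c : QuadraticAlgebra K a b, u * c = 0 → v * c = 0 → c = 0) :
    ∃ (k : K) (P : Fin 3 → QuadraticAlgebra K a b),
      (∀ Q, (∀ i, Q * P i = 0) → Q = 0) ∧
      ∀ i j, H i j = algebraMap K _ k * (P i * star (P j)) := by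
  have hm : ∀ i j l m, H i l * H j m = H i m * H j l := by
    intro i j l m
    obtain ⟨u, v, h, hc⟩ := hr i j
    apply sub_eq_zero.mp
    apply hc
    · linear_combination H j m * h l - H j l * h m
    · linear_combination H i l * h m - H i m * h l
  by_cases hd0 : ∃ i, d i ≠ 0
  · obtain ⟨i, hi⟩ := hd0
    have hinv : algebraMap K (QuadraticAlgebra K a b) (d i)⁻¹ * algebraMap K _ (d i) = 1 := by
      rw [← map_mul, inv_mul_cancel₀ hi, map_one]
    refine ⟨(d i)⁻¹, fun j => H j i, fun Q hQ => ?_, fun j l => ?_⟩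
    · have := hQ i
      simp only [hd] at this
      linear_combination algebraMap K _ (d i)⁻¹ * this - Q * hinv
    · rw [← hs l i, hm j i i l, hd]
      linear_combination -H j l * hinv
  push Not at hd0
  have hd' : ∀ i, H i i = 0 := fun i => by rw [hd, hd0, map_zero]
  by_cases hH : ∀ i j, H i j = 0
  · exact ⟨0, fun _ => 1, fun Q hQ => by simpa using hQ 0, fun i j => by simp [hH]⟩
  push Not at hH
  obtain ⟨i₁, j₁, he⟩ := hH
  set e := H i₁ j₁ with hedef
  have hee : e * star e = 0 := by
    rw [hedef, ← hs, hm, hd' i₁, zero_mul]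
  have htr := QuadraticAlgebra.algebraMap_trace_eq_add_star e
  by_cases hτ : QuadraticAlgebra.trace e = 0
  · exfalso
    rw [hτ, map_zero] at htr
    obtain ⟨u, v, h, hc⟩ := hr i₁ j₁
    apply he
    apply hc
    · have := h j₁
      rw [hd'] at this
      linear_combination this
    · have := h i₁
      rw [hd', hs i₁ j₁, ← hedef] at this
      linear_combination -this - v * htr
  set τ := QuadraticAlgebra.trace e
  let κ := algebraMap K (QuadraticAlgebra K a b)
  have hκs : ∀ x, star (κ x) = κ x := fun x => by
    ext <;> simp [κ]
  have hinv : κ τ⁻¹ * κ τ = 1 := by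
    rw [← map_mul, inv_mul_cancel₀ hτ, map_one]
  obtain ⟨f, hf⟩ : ∃ f, f = κ τ⁻¹ * e := ⟨_, rfl⟩
  obtain ⟨g, hg⟩ : ∃ g, g = star f := ⟨_, rfl⟩
  have hg' : star g = f := by rw [hg, star_star]
  have hg2 : g = κ τ⁻¹ * star e := by rw [hg, hf, star_mul', hκs]
  have hfg : f + g = 1 := by
    rw [hf, hg2]
    linear_combination hinv - κ τ⁻¹ * htr
  have hfg0 : f * g = 0 := by
    rw [hf, hg2]
    linear_combination κ τ⁻¹ ^ 2 * hee
  have hff : f * f = f := by linear_combination f * hfg - hfg0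
  have hgg : g * g = g := by linear_combination g * hfg - hfg0
  have hf0 : f ≠ 0 := by
    intro h
    have h1 : g = 0 := by rw [hg, h, star_zero]
    rw [h, h1] at hfg
    simp at hfg
  have huniq : ∀ x y : K, κ x * f = κ y * f → x = y := by
    intro x y h
    have : (x - y) • f = 0 := by
      rw [Algebra.smul_def, map_sub]
      linear_combination h
    exact sub_eq_zero.mp ((smul_eq_zero.mp this).resolve_right hf0)
  have hχ : ∀ i j, ∃ x : K, H i j * f = κ x * f := fun i j =>
    qa_split f (by rw [← hg, hfg]) (by rw [← hg, hfg0]) (H i j)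
  choose x hx using hχ
  have hxg : ∀ i j, H i j * g = κ (x j i) * g := by
    intro i j
    have := congrArg star (hx j i)
    rwa [star_mul', star_mul', hκs, ← hg, ← hs] at this
  have hxx : ∀ i j, H i j = κ (x i j) * f + κ (x j i) * g := by
    intro i j
    rw [← hx, ← hxg]
    linear_combination -H i j * hfg
  have hxm : ∀ i j l m, x i l * x j m = x i m * x j l := by
    intro i j l m
    apply huniq
    have aux : ∀ i j l m, κ (x i l * x j m) * f = H i l * H j m * f := by
      intro i j l m
      rw [map_mul]
      linear_combination -κ (x i l) * hx j m - H j m * hx i l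
    rw [aux, aux, hm]
  obtain ⟨i₀, j₀, h0⟩ : ∃ i j, x i j ≠ 0 := by
    by_contra hcon
    push Not at hcon
    apply he
    rw [hedef, hxx, hcon, hcon]
    simp
  have hi0 : κ (x i₀ j₀)⁻¹ * κ (x i₀ j₀) = 1 := by
    rw [← map_mul, inv_mul_cancel₀ h0, map_one]
  refine ⟨1, fun i => κ (x i j₀) * f + κ (x i₀ i) * κ (x i₀ j₀)⁻¹ * g, fun Q hQ => ?_,
    fun i j => ?_⟩
  · have e1 := hQ i₀
    have e2 := hQ j₀
    have f1 : Q * f = 0 := by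
      simp only at e1
      linear_combination κ (x i₀ j₀)⁻¹ * f * e1 - Q * f * hi0
        - κ (x i₀ j₀)⁻¹ * Q * κ (x i₀ j₀) * hff
        - κ (x i₀ j₀)⁻¹ * Q * κ (x i₀ i₀) * κ (x i₀ j₀)⁻¹ * hfg0
    have f2 : Q * g = 0 := by
      simp only at e2
      linear_combination g * e2 - Q * g * g * hi0
        - Q * hgg - Q * κ (x j₀ j₀) * hfg0
    linear_combination f1 + f2 - Q * hfg
  · have m1 : κ (x i j₀) * κ (x i₀ j) = κ (x i j) * κ (x i₀ j₀) := by
      rw [← map_mul, ← map_mul, hxm]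
    have m2 : κ (x j j₀) * κ (x i₀ i) = κ (x j i) * κ (x i₀ j₀) := by
      rw [← map_mul, ← map_mul, hxm]
    simp only [star_add, star_mul', hκs, map_one, one_mul, ← hg, hg']
    rw [hxx]
    generalize κ (x i₀ j₀)⁻¹ = r at *
    linear_combination (-κ (x i j) * f - κ (x j i) * g) * hi0 - r * f * m1 - r * g * m2
      - κ (x i j₀) * κ (x i₀ j) * r * hff - κ (x j j₀) * κ (x i₀ i) * r * hgg
      - (κ (x i j₀) * κ (x j j₀) + κ (x i₀ i) * κ (x i₀ j) * r ^ 2) * hfg0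

/-- The embedding of the quadratic algebra in 2×2 matrices. -/
def qaMat {K : Type} [Field K] (t n : K) (z : QuadraticAlgebra K (-n) t) :
    Matrix (Fin 2) (Fin 2) K := !![z.re, z.im; -n * z.im, z.re + t * z.im]

section
variable {K : Type} [Field K] (t n : K)

theorem qaMat_inV (A : Matrix (Fin 2) (Fin 2) K) : InV t n A ↔ ∃ z, A = qaMat t n z := by
  constructor
  · rintro ⟨x, y, rfl⟩
    refine ⟨⟨x, y⟩, ?_⟩
    ext i j
    fin_cases i <;> fin_cases j <;> simp [qaMat] <;> ring
  · rintro ⟨z, rfl⟩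
    refine ⟨z.re, z.im, ?_⟩
    ext i j
    fin_cases i <;> fin_cases j <;> simp [qaMat] <;> ring

theorem qaMat_inj {z w : QuadraticAlgebra K (-n) t} (h : qaMat t n z = qaMat t n w) : z = w := by
  have h1 := congrFun (congrFun h 0) 0
  have h2 := congrFun (congrFun h 0) 1
  simp [qaMat] at h1 h2
  exact QuadraticAlgebra.ext h1 h2

theorem qaMat_mul (z w : QuadraticAlgebra K (-n) t) :
    qaMat t n (z * w) = qaMat t n z * qaMat t n w := by
  ext i j
  fin_cases i <;> fin_cases j <;> simp [qaMat, Matrix.mul_apply] <;> ring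

theorem qaMat_add (z w : QuadraticAlgebra K (-n) t) :
    qaMat t n (z + w) = qaMat t n z + qaMat t n w := by
  ext i j
  fin_cases i <;> fin_cases j <;> simp [qaMat] <;> ring

theorem qaMat_zero : qaMat t n 0 = 0 := by
  ext i j
  fin_cases i <;> fin_cases j <;> simp [qaMat]

theorem qaMat_star (z : QuadraticAlgebra K (-n) t) :
    qaMat t n (star z) = (qaMat t n z).adjugate := by
  ext i j
  fin_cases i <;> fin_cases j <;> simp [qaMat, Matrix.adjugate_fin_two]

theorem qaMat_algebraMap (x : K) : qaMat t n (algebraMap K _ x) = x • 1 := by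
  ext i j
  fin_cases i <;> fin_cases j <;> simp [qaMat]

theorem qaMat_smul (x : K) (z) : qaMat t n (algebraMap K _ x * z) = x • qaMat t n z := by
  rw [qaMat_mul, qaMat_algebraMap, smul_mul_assoc, one_mul]

theorem qaMat_eq_zero {z : QuadraticAlgebra K (-n) t} : qaMat t n z = 0 ↔ z = 0 :=
  ⟨fun h => qaMat_inj t n (h.trans (qaMat_zero t n).symm), fun h => h ▸ qaMat_zero t n⟩

end

/-- The set of rank-1 Hermitian 3×3 matrices over `V` is exactly the set
of `K`-scalar multiples of the matrices `H(M,N,L)` with `(M,N,L) ∈ V³` of trivial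
annihilator in `V`. -/
theorem stmt16 (K : Type) [Field K] (t n : K) :
    {H : Matrix (Fin 3) (Fin 3) (Matrix (Fin 2) (Fin 2) K) |
        IsHermitian3 t n H ∧ HasRankOne t n H} =
      {H : Matrix (Fin 3) (Fin 3) (Matrix (Fin 2) (Fin 2) K) |
        ∃ (k : K) (M N L : Matrix (Fin 2) (Fin 2) K),
          InV t n M ∧ InV t n N ∧ InV t n L ∧
          (∀ P : Matrix (Fin 2) (Fin 2) K, InV t n P →
            P * M = 0 → P * N = 0 → P * L = 0 → P = 0) ∧
          H = k • Hmat M N L} := by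
  ext H
  simp only [Set.mem_ofPred_eq]
  constructor
  · rintro ⟨⟨hV, hD, hS⟩, hR⟩
    choose h hh using fun i j => (qaMat_inV t n _).1 (hV i j)
    choose d hd using hD
    obtain ⟨k, P, hP, hk⟩ := qa_main h d
      (fun i => qaMat_inj t n (by rw [← hh, hd, qaMat_algebraMap]))
      (fun i j => qaMat_inj t n (by rw [← hh, hS, qaMat_star, ← hh]))
      (fun i j => by
        obtain ⟨a, b, ha, hb, h1, h2⟩ := hR i j
        obtain ⟨u, rfl⟩ := (qaMat_inV t n _).1 ha
        obtain ⟨v, rfl⟩ := (qaMat_inV t n _).1 hb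
        refine ⟨u, v, fun l => ?_, fun c hu hv => ?_⟩
        · have := h1 l
          rwa [hh, hh, ← qaMat_mul, ← qaMat_mul, ← qaMat_add, qaMat_eq_zero] at this
        · have := h2 (qaMat t n c) ((qaMat_inV t n _).2 ⟨c, rfl⟩)
            (by rw [← qaMat_mul, hu, qaMat_zero]) (by rw [← qaMat_mul, hv, qaMat_zero])
          rwa [qaMat_eq_zero] at this)
    refine ⟨k, qaMat t n (P 0), qaMat t n (P 1), qaMat t n (P 2),
      (qaMat_inV t n _).2 ⟨_, rfl⟩, (qaMat_inV t n _).2 ⟨_, rfl⟩, (qaMat_inV t n _).2 ⟨_, rfl⟩,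
      ?_, ?_⟩
    · intro Q hQ h0 h1 h2
      obtain ⟨q, rfl⟩ := (qaMat_inV t n _).1 hQ
      rw [← qaMat_mul, qaMat_eq_zero] at h0 h1 h2
      rw [qaMat_eq_zero]
      apply hP
      intro i
      fin_cases i
      · exact h0
      · exact h1
      · exact h2
    · have hvec : ∀ i, ![qaMat t n (P 0), qaMat t n (P 1), qaMat t n (P 2)] i
          = qaMat t n (P i) := by
        intro i
        fin_cases i <;> rfl
      funext i j
      change H i j = k • (_ * Matrix.adjugate _)
      rw [hvec, hvec, hh, hk, qaMat_smul, qaMat_mul, qaMat_star]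
  · rintro ⟨k, M, N, L, hM, hN, hL, -, rfl⟩
    obtain ⟨m, rfl⟩ := (qaMat_inV t n _).1 hM
    obtain ⟨p, rfl⟩ := (qaMat_inV t n _).1 hN
    obtain ⟨l, rfl⟩ := (qaMat_inV t n _).1 hL
    obtain ⟨P, hPdef⟩ : ∃ P : Fin 3 → QuadraticAlgebra K (-n) t, P = ![m, p, l] := ⟨_, rfl⟩
    have hvec : ∀ i, ![qaMat t n m, qaMat t n p, qaMat t n l] i = qaMat t n (P i) := by
      intro i
      subst hPdef
      fin_cases i <;> rfl
    have hE : ∀ i j, (k • Hmat (qaMat t n m) (qaMat t n p) (qaMat t n l)) i j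
        = qaMat t n (algebraMap K _ k * (P i * star (P j))) := by
      intro i j
      change k • (![qaMat t n m, qaMat t n p, qaMat t n l] i *
        (![qaMat t n m, qaMat t n p, qaMat t n l] j).adjugate) = _
      rw [hvec, hvec, qaMat_smul, qaMat_mul, qaMat_star]
    refine ⟨⟨fun i j => ?_, fun i => ?_, fun i j => ?_⟩, fun i j => ?_⟩
    · rw [hE]
      exact (qaMat_inV t n _).2 ⟨_, rfl⟩
    · refine ⟨k * QuadraticAlgebra.norm (P i), ?_⟩
      rw [hE, ← QuadraticAlgebra.algebraMap_norm_eq_mul_star, ← map_mul, qaMat_algebraMap]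
    · rw [hE, hE, ← qaMat_star]
      congr 1
      have : star (algebraMap K (QuadraticAlgebra K (-n) t) k) = algebraMap K _ k := by
        ext <;> simp
      rw [star_mul', star_mul', star_star, this]
      ring
    · obtain ⟨u, v, h1, h2⟩ := qa_rank (P i) (P j)
      refine ⟨qaMat t n u, qaMat t n v, (qaMat_inV t n _).2 ⟨_, rfl⟩,
        (qaMat_inV t n _).2 ⟨_, rfl⟩, fun c => ?_, fun c hc hu hv => ?_⟩
      · rw [hE, hE, ← qaMat_mul, ← qaMat_mul, ← qaMat_add, qaMat_eq_zero]
        linear_combination algebraMap K _ k * star (P c) * h1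
      · obtain ⟨c, rfl⟩ := (qaMat_inV t n _).1 hc
        rw [← qaMat_mul, qaMat_eq_zero] at hu hv
        rw [qaMat_eq_zero]
        exact h2 c hu hv
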